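/- Let $n \ge 1$ be an integer that is not divisible by $3$, and let $\omega = -\tfrac12 + \tfrac{\sqrt3}{2}\, i \in \mathbb{H}$, where $\mathbb{H} = \{z \in \mathbb{C} : \operatorname{Im} z > 0\}$. The number of ways of writing $n = c^2 - cd + d^2$ with $c, d$ coprime positive integers (that is, the number of such ordered pairs $(c,d)$) equals the number of integers $k$ with $0 < k < 2n$, $k$ coprime to $2n$, such that the vertical line $\{k/(2n) + i t : t > 0\} \subset \mathbb{H}$ contains a point of the orbit of $\omega$ under the action of $\mathrm{SL}(2,\mathbb{Z})$ on $\mathbb{H}$ by linear fractional transformations. -/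

import Mathlib

/-- The primitive cube root of unity `ω = -1/2 + (√3/2) i` as a point of the upper half-plane. -/
noncomputable def omegaH : UpperHalfPlane :=
  ⟨⟨-1 / 2, Real.sqrt 3 / 2⟩, by
    simp only [Complex.im]
    positivity⟩

/-- The vertical line `{x + i t : t > 0}` in the upper half-plane. -/
def verticalLine (x : ℝ) : Set UpperHalfPlane :=
  {z | z.re = x}

/-- The ordered pairs of coprime positive integers `(c, d)` with `c² - c d + d² = n`. -/
def eisensteinReps (n : ℕ) : Set (ℤ × ℤ) :=
  {q | 0 < q.1 ∧ 0 < q.2 ∧ IsCoprime q.1 q.2 ∧ q.1 ^ 2 - q.1 * q.2 + q.2 ^ 2 = (n : ℤ)}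

/-- The integers `0 < k < 2n`, coprime to `2n`, such that the vertical line at `k / (2n)` contains
a point of the `SL(2, ℤ)`-orbit of `ω`. -/
def orbitLines (n : ℕ) : Set ℤ :=
  {k | 0 < k ∧ k < 2 * (n : ℤ) ∧ IsCoprime k (2 * (n : ℤ)) ∧
    (verticalLine ((k : ℝ) / (2 * (n : ℝ))) ∩
      MulAction.orbit (Matrix.SpecialLinearGroup (Fin 2) ℤ) omegaH).Nonempty}


/-!
In `ℤ[ω]`, if `n` divides `N(k + ω)` then `k + ω` has a factor of norm exactly `n`: reduce `k`
modulo `n`, so that the cofactor `m = N(k + ω) / n` is smaller than `n`, and take the quotient of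
`k + ω` by a factor of norm `m`. This has two consequences.

* The orbit of `ω` consists of the points `(k + ω) / n` with `n ∣ N(k + ω) = k² - k + 1`. Hence the
  line at `(2 j - 1) / (2 n)` with coprime numerator and denominator meets the orbit exactly when
  `j² - j + 1 ≡ 0` or `3 j² - 3 j + 1 ≡ 0 (mod n)`, the point being `(j + ω) / n` or
  `(3 j - 1 + ω) / (3 n)`. The map `j ↦ 3 j - 1` matches the two root sets, as `3` is invertible.
* Rotating the factor by a unit into the sextant `0 < arg z ≤ π / 3` shows that
  `(c, d) ↦ c / d (mod n)` maps the representations with `d ≤ c` onto the roots of `X² - X + 1`. It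
  is injective there because `|c d' - c' d| < n`. The other representations are the mirror images.
-/

section QuadraticAlgebra

variable {R : Type*} [CommRing R] {a b k : R} {α : QuadraticAlgebra R a b}

theorem norm_dvd_re_sub_mul_im_of_dvd (h : α ∣ ⟨k, 1⟩) : α.norm ∣ α.re - k * α.im := by
  obtain ⟨β, hβ⟩ := h
  refine ⟨β.im, ?_⟩
  obtain ⟨hre, him⟩ := QuadraticAlgebra.ext_iff.1 hβ
  simp only [QuadraticAlgebra.re_mul, QuadraticAlgebra.im_mul] at hre him
  rw [QuadraticAlgebra.norm_def]
  linear_combination α.re * him - α.im * hre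

theorem isCoprime_re_im_of_dvd (h : α ∣ ⟨k, 1⟩) : IsCoprime α.re α.im := by
  obtain ⟨β, hβ⟩ := h
  have him : 1 = (α * β).im := congrArg QuadraticAlgebra.im hβ
  rw [QuadraticAlgebra.im_mul] at him
  exact ⟨β.im, β.re + b * β.im, by linear_combination -him⟩

end QuadraticAlgebra

/-- The ring `ℤ[ω]` of Eisenstein integers; `⟨x, y⟩` is `x + y ω`, where `ω² = -1 - ω`. -/
abbrev EisensteinInt : Type := QuadraticAlgebra ℤ (-1) (-1)

namespace EisensteinInt

theorem norm_eq (α : EisensteinInt) : α.norm = α.re ^ 2 - α.re * α.im + α.im ^ 2 := by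
  rw [QuadraticAlgebra.norm_def]
  ring

theorem exists_dvd_norm_eq {n : ℕ} (hn : 0 < n) {k : ℤ}
    (h : (n : ℤ) ∣ (⟨k, 1⟩ : EisensteinInt).norm) :
    ∃ α : EisensteinInt, α ∣ ⟨k, 1⟩ ∧ α.norm = n := by
  induction n using Nat.strong_induction_on generalizing k with
  | _ n ih =>
  obtain rfl | hn1 : n = 1 ∨ 1 < n := by omega
  · exact ⟨1, one_dvd _, by simp⟩
  have hnorm (x : ℤ) : (⟨x, 1⟩ : EisensteinInt).norm = x ^ 2 - x + 1 := by simp [norm_eq]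
  set r := k % n
  have hk : (⟨k, 1⟩ : EisensteinInt) = ⟨r, 1⟩ + (n : ℤ) * (k / n : ℤ) := by
    ext <;> simp [r, Int.emod_add_mul_ediv]
  suffices ∃ α : EisensteinInt, α ∣ ⟨r, 1⟩ ∧ α.norm = n by
    obtain ⟨α, hα, hαn⟩ := this
    have hdvd : α ∣ (n : ℤ) := ⟨star α, by
      rw [← hαn]; exact QuadraticAlgebra.algebraMap_norm_eq_mul_star α⟩
    exact ⟨α, hk ▸ dvd_add hα (hdvd.mul_right _), hαn⟩
  have hr0 : 0 ≤ r := Int.emod_nonneg k (by positivity)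
  have hrn : r < n := Int.emod_lt_of_pos k (by positivity)
  obtain ⟨m, hm⟩ : (n : ℤ) ∣ (⟨r, 1⟩ : EisensteinInt).norm := by
    rw [hnorm] at h ⊢
    obtain ⟨m, hm⟩ := h
    exact ⟨m - k / n * (r + k - 1), by
      linear_combination hm + (r + k - 1) * Int.emod_add_mul_ediv k n⟩
  have hm0 : 0 < m := by nlinarith [hnorm r, sq_nonneg (r - 1)]
  have hmn : m < n := by nlinarith [hnorm r]
  lift m to ℕ using hm0.le
  obtain ⟨β, ⟨α, hα⟩, hβ⟩ := ih m (by exact_mod_cast hmn) (by exact_mod_cast hm0)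
    (Dvd.intro_left _ hm.symm)
  refine ⟨α, ⟨β, hα.trans (mul_comm _ _)⟩, ?_⟩
  rw [hα, map_mul, hβ, mul_comm] at hm
  exact mul_right_cancel₀ hm0.ne' hm

theorem exists_norm_one_mul_mem_sector {α : EisensteinInt} (hα : α ≠ 0) :
    ∃ u : EisensteinInt, u.norm = 1 ∧ 0 < (u * α).im ∧ (u * α).im ≤ (u * α).re := by
  wlog hpos : 0 < α.im ∨ α.im = 0 ∧ 0 < α.re generalizing α
  · have hne : α.re ≠ 0 ∨ α.im ≠ 0 := by
      contrapose! hα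
      exact QuadraticAlgebra.ext hα.1 hα.2
    obtain ⟨u, hu, h⟩ := this (neg_ne_zero.2 hα) (by
      simp only [QuadraticAlgebra.im_neg, QuadraticAlgebra.re_neg]; omega)
    exact ⟨-u, by rw [QuadraticAlgebra.norm_neg, hu], by simpa only [neg_mul_comm] using h⟩
  obtain h | h | h | h : (0 < α.im ∧ α.im ≤ α.re) ∨ (α.im = 0 ∧ 0 < α.re) ∨
      (0 ≤ α.re ∧ α.re < α.im) ∨ (α.re < 0 ∧ 0 < α.im) := by omega
  · exact ⟨1, by simp, by simpa using h⟩
  · exact ⟨⟨1, 1⟩, by simp [norm_eq], by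
      simp only [QuadraticAlgebra.im_mul, QuadraticAlgebra.re_mul]; omega⟩
  · exact ⟨⟨0, -1⟩, by simp [norm_eq], by
      simp only [QuadraticAlgebra.im_mul, QuadraticAlgebra.re_mul]; omega⟩
  · exact ⟨⟨-1, -1⟩, by simp [norm_eq], by
      simp only [QuadraticAlgebra.im_mul, QuadraticAlgebra.re_mul]; omega⟩

end EisensteinInt

/-- The representations `n = c² - c d + d²` with `d ≤ c`: those for which `c + d ω` lies in the
half-open sextant `0 < arg z ≤ π / 3`. -/
def dominantReps (n : ℕ) : Set (ℤ × ℤ) :=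
  {q ∈ eisensteinReps n | q.2 ≤ q.1}

/-- The roots of `X² - X + 1`, the minimal polynomial of `-ω`. A root `j` in `ZMod n`
accounts for the orbit point `(j + ω) / n`. -/
def eisensteinRoots (R : Type*) [CommRing R] : Set R :=
  {x | x ^ 2 - x + 1 = 0}

/-- The roots of `3 X² - 3 X + 1`, which is `X² - X + 1` evaluated at `3 X - 1` and divided by `3`.
A root `j` in `ZMod n` accounts for the orbit point `(3 j - 1 + ω) / (3 n)`. -/
def triplingRoots (R : Type*) [CommRing R] : Set R :=
  {x | 3 * x ^ 2 - 3 * x + 1 = 0}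

theorem natCast_dvd_norm_iff_mem_eisensteinRoots {n : ℕ} {k : ℤ} :
    (n : ℤ) ∣ (⟨k, 1⟩ : EisensteinInt).norm ↔ (k : ZMod n) ∈ eisensteinRoots (ZMod n) := by
  rw [← ZMod.intCast_zmod_eq_zero_iff_dvd, EisensteinInt.norm_eq]
  simp [eisensteinRoots]

theorem isUnit_intCast_snd_of_mem_eisensteinReps {n : ℕ} {q : ℤ × ℤ} (hq : q ∈ eisensteinReps n) :
    IsUnit (q.2 : ZMod n) := by
  obtain ⟨-, -, hcop, hnorm⟩ := hq
  rw [ZMod.coe_int_isUnit_iff_isCoprime, ← hnorm,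
    show q.1 ^ 2 - q.1 * q.2 + q.2 ^ 2 = q.1 ^ 2 + q.2 * (q.2 - q.1) by ring]
  exact hcop.pow_left.add_mul_left_left _

theorem mul_snd_sub_mul_snd_lt_of_mem_dominantReps {n : ℕ} {q q' : ℤ × ℤ}
    (hq : q ∈ eisensteinReps n) (hq' : q' ∈ dominantReps n) :
    q.1 * q'.2 - q'.1 * q.2 < n := by
  obtain ⟨hc, hd, -, hnorm⟩ := hq
  obtain ⟨⟨hc', -, -, hnorm'⟩, hle'⟩ := hq'
  have hsub : (q.1 - q.2) ^ 2 < n := by linarith [mul_pos hc hd]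
  have hsnd : q'.2 ^ 2 ≤ n := by linarith [mul_nonneg hc'.le (sub_nonneg.2 hle')]
  calc q.1 * q'.2 - q'.1 * q.2
      ≤ q'.2 * (q.1 - q.2) := by linarith [mul_nonneg hd.le (sub_nonneg.2 hle')]
    _ < n := by linarith [sq_nonneg (q'.2 - (q.1 - q.2))]

theorem eq_and_eq_of_isCoprime_of_mul_eq_mul {c d c' d' : ℤ} (hc : 0 < c) (hc' : 0 < c')
    (h : IsCoprime c d) (h' : IsCoprime c' d') (heq : c * d' = c' * d) : c = c' ∧ d = d' := by
  have hcc : c = c' := Int.dvd_antisymm hc.le hc'.le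
    (h.dvd_of_dvd_mul_right (Dvd.intro _ heq)) (h'.dvd_of_dvd_mul_right (Dvd.intro _ heq.symm))
  subst hcc
  exact ⟨rfl, (mul_left_cancel₀ hc.ne' heq).symm⟩

theorem exists_dominantReps_dvd_sub {n : ℕ} (hn : 0 < n) {k : ℤ}
    (h : (n : ℤ) ∣ (⟨k, 1⟩ : EisensteinInt).norm) :
    ∃ q ∈ dominantReps n, (n : ℤ) ∣ q.1 - k * q.2 := by
  obtain ⟨α, hα, hαn⟩ := EisensteinInt.exists_dvd_norm_eq hn h
  have hα0 : α ≠ 0 := by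
    rintro rfl
    rw [QuadraticAlgebra.norm_zero] at hαn
    omega
  obtain ⟨u, hu, him, hre⟩ := EisensteinInt.exists_norm_one_mul_mem_sector hα0
  have hunit : IsUnit u := by rw [QuadraticAlgebra.isUnit_iff_norm_isUnit, hu]; exact isUnit_one
  have hdvd : u * α ∣ ⟨k, 1⟩ := hunit.mul_left_dvd.2 hα
  have hnorm : (u * α).norm = n := by rw [map_mul, hu, one_mul, hαn]
  exact ⟨((u * α).re, (u * α).im),
    ⟨⟨him.trans_le hre, him, isCoprime_re_im_of_dvd hdvd,
      (EisensteinInt.norm_eq _).symm.trans hnorm⟩, hre⟩,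
    hnorm ▸ norm_dvd_re_sub_mul_im_of_dvd hdvd⟩

theorem bijOn_dominantReps_eisensteinRoots {n : ℕ} (hn : 0 < n) :
    Set.BijOn (fun q : ℤ × ℤ => (q.1 : ZMod n) * (q.2 : ZMod n)⁻¹) (dominantReps n)
      (eisensteinRoots (ZMod n)) := by
  have hinv {q : ℤ × ℤ} (hq : q ∈ dominantReps n) : (q.2 : ZMod n) * (q.2 : ZMod n)⁻¹ = 1 :=
    ZMod.mul_inv_of_unit _ (isUnit_intCast_snd_of_mem_eisensteinReps hq.1)
  refine ⟨fun q hq => ?_, fun q hq q' hq' heq => ?_, fun x hx => ?_⟩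
  · have hnorm : (q.1 : ZMod n) ^ 2 - q.1 * q.2 + q.2 ^ 2 = 0 := by
      have := congrArg (Int.cast : ℤ → ZMod n) hq.1.2.2.2
      push_cast at this
      rwa [ZMod.natCast_self] at this
    change ((q.1 : ZMod n) * (q.2 : ZMod n)⁻¹) ^ 2 - q.1 * (q.2 : ZMod n)⁻¹ + 1 = 0
    linear_combination ((q.2 : ZMod n)⁻¹) ^ 2 * hnorm
      + (q.1 * (q.2 : ZMod n)⁻¹ - q.2 * (q.2 : ZMod n)⁻¹ - 1) * hinv hq
  · have hdvd : (n : ℤ) ∣ q.1 * q'.2 - q'.1 * q.2 := by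
      rw [← ZMod.intCast_zmod_eq_zero_iff_dvd]
      push_cast
      linear_combination (q.2 * q'.2 : ZMod n) * heq - q.1 * q'.2 * hinv hq
        + q'.1 * q.2 * hinv hq'
    have hcross := Int.eq_zero_of_abs_lt_dvd hdvd
      (abs_lt.2 ⟨by linarith [mul_snd_sub_mul_snd_lt_of_mem_dominantReps hq'.1 hq],
        mul_snd_sub_mul_snd_lt_of_mem_dominantReps hq.1 hq'⟩)
    obtain ⟨⟨hc, -, hcop, -⟩, -⟩ := hq
    obtain ⟨⟨hc', -, hcop', -⟩, -⟩ := hq'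
    exact Prod.ext_iff.2
      (eq_and_eq_of_isCoprime_of_mul_eq_mul hc hc' hcop hcop' (sub_eq_zero.1 hcross))
  · obtain ⟨k, rfl⟩ := ZMod.intCast_surjective x
    obtain ⟨q, hq, hdvd⟩ := exists_dominantReps_dvd_sub hn
      (natCast_dvd_norm_iff_mem_eisensteinRoots.2 hx)
    refine ⟨q, hq, ?_⟩
    rw [← ZMod.intCast_zmod_eq_zero_iff_dvd] at hdvd
    push_cast at hdvd
    linear_combination ((q.2 : ZMod n)⁻¹) * hdvd + k * hinv hq

theorem encard_dominantReps {n : ℕ} (hn : 0 < n) :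
    (dominantReps n).encard = (eisensteinRoots (ZMod n)).encard := by
  rw [← (bijOn_dominantReps_eisensteinRoots hn).image_eq,
    (bijOn_dominantReps_eisensteinRoots hn).injOn.encard_image]

theorem encard_triplingRoots {R : Type*} [CommRing R] (h3 : IsUnit (3 : R)) :
    (triplingRoots R).encard = (eisensteinRoots R).encard := by
  have hbij : Function.Bijective fun x : R => 3 * x - 1 :=
    (Equiv.subRight (1 : R)).bijective.comp (IsUnit.isUnit_iff_mulLeft_bijective.1 h3)
  rw [← Set.encard_preimage_of_bijective hbij (eisensteinRoots R)]
  congr 1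
  ext x
  change 3 * x ^ 2 - 3 * x + 1 = 0 ↔ (3 * x - 1) ^ 2 - (3 * x - 1) + 1 = 0
  rw [show (3 * x - 1) ^ 2 - (3 * x - 1) + 1 = 3 * (3 * x ^ 2 - 3 * x + 1) by ring,
    h3.mul_right_eq_zero]

theorem disjoint_eisensteinRoots_triplingRoots {n : ℕ} (hn : 1 < n) :
    Disjoint (eisensteinRoots (ZMod n)) (triplingRoots (ZMod n)) := by
  rw [Set.disjoint_left]
  intro x hx hx'
  replace hx : x ^ 2 - x + 1 = 0 := hx
  replace hx' : 3 * x ^ 2 - 3 * x + 1 = 0 := hx'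
  have h2 : ((2 : ℕ) : ZMod n) = 0 := by push_cast; linear_combination 3 * hx - hx'
  obtain rfl : n = 2 := by
    have := Nat.le_of_dvd two_pos ((ZMod.natCast_eq_zero_iff _ _).1 h2)
    omega
  revert x
  decide

theorem bijOn_intCast_Ioc {n : ℕ} (hn : 0 < n) (a : ℤ) :
    Set.BijOn (Int.cast : ℤ → ZMod n) (Set.Ioc a (a + n)) Set.univ := by
  refine ⟨fun _ _ => Set.mem_univ _, fun k hk l hl hkl => ?_, fun x _ => ?_⟩
  · have hdvd := (ZMod.intCast_eq_intCast_iff_dvd_sub k l n).1 hkl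
    have := Int.eq_zero_of_abs_lt_dvd hdvd (abs_lt.2 ⟨by linarith [hk.2, hl.1],
      by linarith [hk.1, hl.2]⟩)
    linarith
  · obtain ⟨k, rfl⟩ := ZMod.intCast_surjective x
    obtain ⟨m, hm, -⟩ := existsUnique_add_zsmul_mem_Ioc (Int.natCast_pos.2 hn) k a
    exact ⟨_, hm, by simp⟩

theorem eisensteinReps_eq_union (n : ℕ) :
    eisensteinReps n = dominantReps n ∪ Prod.swap ⁻¹' dominantReps n := by
  ext ⟨c, d⟩
  have hswap : (d, c) ∈ eisensteinReps n ↔ (c, d) ∈ eisensteinReps n := by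
    simp only [eisensteinReps, Set.mem_ofPred_eq]
    rw [isCoprime_comm, show d ^ 2 - d * c + c ^ 2 = c ^ 2 - c * d + d ^ 2 by ring]
    tauto
  simp only [dominantReps, Set.mem_union, Set.mem_preimage, Set.mem_ofPred_eq, Prod.swap_prod_mk,
    hswap, ← and_or_left, le_total d c, and_true]

theorem disjoint_dominantReps_swap {n : ℕ} (hn : 1 < n) :
    Disjoint (dominantReps n) (Prod.swap ⁻¹' dominantReps n) := by
  rw [Set.disjoint_left]
  rintro ⟨c, d⟩ ⟨⟨hc, -, hcop, hnorm⟩, hle⟩ ⟨-, hle'⟩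
  obtain rfl : c = d := le_antisymm hle' hle
  obtain rfl : c = 1 := (Int.isUnit_iff.1 (isCoprime_self.1 hcop)).resolve_right (by omega)
  norm_num at hnorm
  omega

theorem eisensteinReps_one : eisensteinReps 1 = dominantReps 1 := by
  ext q
  refine ⟨fun hq => ⟨hq, ?_⟩, And.left⟩
  obtain ⟨hc, hd, -, hnorm⟩ := hq
  push_cast at hnorm
  nlinarith [mul_pos hc hd]

namespace EisensteinInt

theorem omegaH_mul_self : (omegaH : ℂ) * omegaH = (-1 : ℤ) • 1 + (-1 : ℤ) • (omegaH : ℂ) := by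
  have hsq : √(3 : ℝ) * √3 = 3 := Real.mul_self_sqrt (by norm_num)
  apply Complex.ext
  · simp only [omegaH, Complex.mul_re, Complex.add_re, neg_smul, one_smul, Complex.neg_re,
      Complex.one_re]
    linear_combination -hsq / 4
  · simp only [omegaH, Complex.mul_im, Complex.add_im, neg_smul, one_smul, Complex.neg_im,
      Complex.one_im]
    ring

/-- The embedding of `ℤ[ω]` into `ℂ` that sends `ω` to the point `omegaH`. -/
noncomputable def toComplex : EisensteinInt →ₐ[ℤ] ℂ :=
  QuadraticAlgebra.lift ⟨omegaH, omegaH_mul_self⟩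

theorem toComplex_apply (α : EisensteinInt) : toComplex α = α.im * omegaH + α.re := by
  rw [toComplex, QuadraticAlgebra.lift_apply_apply]
  simp [add_comm]

theorem toComplex_re (α : EisensteinInt) : (toComplex α).re = α.re - α.im / 2 := by
  simp only [toComplex_apply, omegaH, Complex.add_re, Complex.mul_re, Complex.intCast_re,
    Complex.intCast_im]
  ring

theorem norm_pos {α : EisensteinInt} (hα : α ≠ 0) : 0 < α.norm := by
  contrapose! hα
  rw [norm_eq] at hα
  have him : α.im = 0 := by nlinarith [sq_nonneg (2 * α.re - α.im)]
  have hre : α.re = 0 := by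
    rw [him] at hα
    nlinarith
  exact QuadraticAlgebra.ext hre him

theorem toComplex_mul_toComplex_star (α : EisensteinInt) :
    toComplex α * toComplex (star α) = α.norm := by
  rw [← map_mul, ← QuadraticAlgebra.algebraMap_norm_eq_mul_star, AlgHom.commutes]
  rfl

theorem toComplex_div {α : EisensteinInt} (hα : α.norm ≠ 0) (β : EisensteinInt) :
    toComplex β / toComplex α = toComplex (β * star α) / α.norm := by
  have hne : toComplex α * toComplex (star α) ≠ 0 := by
    rw [toComplex_mul_toComplex_star]
    exact_mod_cast hα
  rw [map_mul, ← toComplex_mul_toComplex_star, mul_div_mul_right _ _ (right_ne_zero_of_mul hne)]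

theorem coe_smul_omegaH (g : Matrix.SpecialLinearGroup (Fin 2) ℤ) :
    ((g • omegaH : UpperHalfPlane) : ℂ) =
      toComplex ⟨g 0 1, g 0 0⟩ / toComplex ⟨g 1 1, g 1 0⟩ := by
  rw [UpperHalfPlane.coe_specialLinearGroup_apply, toComplex_apply, toComplex_apply]
  simp only [algebraMap_int_eq, eq_intCast, Complex.ofReal_intCast]

theorem exists_coe_smul_omegaH_eq_div (g : Matrix.SpecialLinearGroup (Fin 2) ℤ) :
    ∃ n k : ℤ, 0 < n ∧ n ∣ (⟨k, 1⟩ : EisensteinInt).norm ∧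
      ((g • omegaH : UpperHalfPlane) : ℂ) = toComplex ⟨k, 1⟩ / n := by
  set α : EisensteinInt := ⟨g 1 1, g 1 0⟩
  set β : EisensteinInt := ⟨g 0 1, g 0 0⟩
  have hdet : g 0 0 * g 1 1 - g 0 1 * g 1 0 = 1 := Matrix.det_fin_two g.1 ▸ g.det_coe
  have hmul : β * star α = ⟨(β * star α).re, 1⟩ := by
    refine QuadraticAlgebra.ext rfl ?_
    simp only [α, β, QuadraticAlgebra.star_mk, QuadraticAlgebra.mk_mul_mk]
    linear_combination hdet
  have hα : 0 < α.norm := norm_pos fun h0 => by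
    rw [h0, star_zero, mul_zero] at hmul
    exact zero_ne_one (congrArg QuadraticAlgebra.im hmul)
  refine ⟨α.norm, (β * star α).re, hα, ?_, ?_⟩
  · rw [← hmul, map_mul, QuadraticAlgebra.norm_star]
    exact dvd_mul_left _ _
  · rw [coe_smul_omegaH, toComplex_div hα.ne', ← hmul]

theorem exists_coe_smul_omegaH_eq_of_dvd_norm {n : ℕ} (hn : 0 < n) {k : ℤ}
    (h : (n : ℤ) ∣ (⟨k, 1⟩ : EisensteinInt).norm) :
    ∃ g : Matrix.SpecialLinearGroup (Fin 2) ℤ,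
      ((g • omegaH : UpperHalfPlane) : ℂ) = toComplex ⟨k, 1⟩ / n := by
  obtain ⟨α, ⟨β, hβ⟩, hα⟩ := exists_dvd_norm_eq hn h
  have him : 1 = (α * β).im := congrArg QuadraticAlgebra.im hβ
  let g : Matrix.SpecialLinearGroup (Fin 2) ℤ :=
    ⟨!![β.im, β.re; (star α).im, (star α).re], by
      rw [Matrix.det_fin_two_of]
      rw [QuadraticAlgebra.im_mul] at him
      rw [QuadraticAlgebra.re_star, QuadraticAlgebra.im_star]
      linear_combination -him⟩
  have hg : ((g • omegaH : UpperHalfPlane) : ℂ) = toComplex β / toComplex (star α) :=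
    coe_smul_omegaH g
  refine ⟨g, ?_⟩
  rw [hg, toComplex_div, star_star, mul_comm β, ← hβ, QuadraticAlgebra.norm_star, hα]
  · rfl
  · rw [QuadraticAlgebra.norm_star, hα]
    positivity

end EisensteinInt

theorem verticalLine_inter_orbit_nonempty_iff {x : ℝ} :
    (verticalLine x ∩
      MulAction.orbit (Matrix.SpecialLinearGroup (Fin 2) ℤ) omegaH).Nonempty ↔
    ∃ n : ℕ, ∃ k : ℤ, 0 < n ∧ (n : ℤ) ∣ (⟨k, 1⟩ : EisensteinInt).norm ∧
      x = ((2 * k - 1 : ℤ) : ℝ) / (2 * n) := by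
  have hre (n : ℕ) (k : ℤ) : (EisensteinInt.toComplex ⟨k, 1⟩ / n).re =
      ((2 * k - 1 : ℤ) : ℝ) / (2 * n) := by
    rw [Complex.div_natCast_re, EisensteinInt.toComplex_re]
    push_cast
    rw [mul_comm, ← div_div]
    ring
  constructor
  · rintro ⟨_, hx, g, rfl⟩
    obtain ⟨n, k, hn, hdvd, hg⟩ := EisensteinInt.exists_coe_smul_omegaH_eq_div g
    lift n to ℕ using hn.le
    refine ⟨n, k, by exact_mod_cast hn, hdvd, ?_⟩
    rw [← hre, ← Int.cast_natCast, ← hg]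
    exact hx.symm
  · rintro ⟨n, k, hn, hdvd, rfl⟩
    obtain ⟨g, hg⟩ := EisensteinInt.exists_coe_smul_omegaH_eq_of_dvd_norm hn hdvd
    refine ⟨g • omegaH, ?_, g, rfl⟩
    rw [← hre, ← hg]
    rfl

theorem natCast_mul_three_dvd_norm_iff_mem_triplingRoots {n : ℕ} {j : ℤ} :
    ((n * 3 : ℕ) : ℤ) ∣ (⟨3 * j - 1, 1⟩ : EisensteinInt).norm ↔
      (j : ZMod n) ∈ triplingRoots (ZMod n) := by
  rw [EisensteinInt.norm_eq,
    show (3 * j - 1) ^ 2 - (3 * j - 1) * 1 + 1 ^ 2 = (3 * j ^ 2 - 3 * j + 1) * 3 by ring,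
    Nat.cast_mul, Nat.cast_ofNat, mul_dvd_mul_iff_right three_ne_zero,
    ← ZMod.intCast_zmod_eq_zero_iff_dvd]
  simp [triplingRoots]

-- With `N = n t`, the identity `4 (k² - k + 1) = (2 k - 1)² + 3` forces `t ∣ 3`.
theorem eq_or_eq_mul_three_of_mul_eq_mul {n N : ℕ} (hn : 0 < n) {j k : ℤ}
    (hj : IsCoprime (2 * j - 1) n) (hN : (N : ℤ) ∣ (⟨k, 1⟩ : EisensteinInt).norm)
    (hcross : (2 * j - 1) * N = (2 * k - 1) * n) :
    N = n ∧ k = j ∨ N = n * 3 ∧ k = 3 * j - 1 := by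
  obtain ⟨t, rfl⟩ : n ∣ N := Int.natCast_dvd_natCast.1 <|
    hj.symm.dvd_of_dvd_mul_left (Dvd.intro_left _ hcross.symm)
  have hk : 2 * k - 1 = (2 * j - 1) * t := by
    apply mul_right_cancel₀ (Int.natCast_ne_zero.2 hn.ne')
    push_cast at hcross
    linear_combination -hcross
  have ht : (t : ℤ) ∣ 3 := by
    obtain ⟨e, he⟩ := hN
    rw [EisensteinInt.norm_eq] at he
    push_cast at he
    exact ⟨4 * n * e - (2 * j - 1) ^ 2 * t, by
      linear_combination 4 * he - (2 * k - 1 + (2 * j - 1) * t) * hk⟩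
  obtain rfl | rfl := (Nat.dvd_prime Nat.prime_three).1 (Int.natCast_dvd_natCast.1 ht)
  · exact Or.inl ⟨mul_one n, by push_cast at hk; linarith⟩
  · exact Or.inr ⟨rfl, by push_cast at hk; linarith⟩

theorem verticalLine_inter_orbit_nonempty_iff_mem_roots {n : ℕ} (hn : 0 < n) {j : ℤ}
    (hj : IsCoprime (2 * j - 1) n) :
    (verticalLine (((2 * j - 1 : ℤ) : ℝ) / (2 * n)) ∩
      MulAction.orbit (Matrix.SpecialLinearGroup (Fin 2) ℤ) omegaH).Nonempty ↔
    (j : ZMod n) ∈ eisensteinRoots (ZMod n) ∪ triplingRoots (ZMod n) := by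
  rw [verticalLine_inter_orbit_nonempty_iff]
  constructor
  · rintro ⟨N, k, hN, hdvd, hx⟩
    have hcross : (2 * j - 1) * N = (2 * k - 1) * n := by
      rw [div_eq_div_iff (by positivity) (by positivity)] at hx
      have : ((2 * j - 1 : ℤ) : ℝ) * N = (2 * k - 1 : ℤ) * n := by linarith
      exact_mod_cast this
    obtain ⟨rfl, rfl⟩ | ⟨rfl, rfl⟩ := eq_or_eq_mul_three_of_mul_eq_mul hn hj hdvd hcross
    · exact Or.inl (natCast_dvd_norm_iff_mem_eisensteinRoots.1 hdvd)
    · exact Or.inr (natCast_mul_three_dvd_norm_iff_mem_triplingRoots.1 hdvd)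
  · rintro (h | h)
    · exact ⟨n, j, hn, natCast_dvd_norm_iff_mem_eisensteinRoots.2 h, rfl⟩
    · refine ⟨n * 3, 3 * j - 1, by positivity,
        natCast_mul_three_dvd_norm_iff_mem_triplingRoots.2 h, ?_⟩
      push_cast
      field_simp
      ring

theorem isUnit_three_zmod {n : ℕ} (h3 : ¬ 3 ∣ n) : IsUnit (3 : ZMod n) := by
  have := (ZMod.isUnit_iff_coprime 3 n).2 ((Nat.Prime.coprime_iff_not_dvd Nat.prime_three).2 h3)
  exact_mod_cast this

theorem isUnit_two_mul_sub_one_of_mem_roots {R : Type*} [CommRing R] (h3 : IsUnit (3 : R)) {x : R}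
    (hx : x ∈ eisensteinRoots R ∪ triplingRoots R) : IsUnit (2 * x - 1) := by
  rcases hx with (h : x ^ 2 - x + 1 = 0) | (h : 3 * x ^ 2 - 3 * x + 1 = 0)
  · have hsq : (2 * x - 1) * (2 * x - 1) = -3 := by linear_combination 4 * h
    exact isUnit_of_mul_isUnit_left (hsq ▸ h3.neg)
  · exact .of_mul_eq_one (-3 * (2 * x - 1)) (by linear_combination -4 * h)

theorem orbitLines_eq_image {n : ℕ} (hn : 0 < n) (h3 : ¬ 3 ∣ n) :
    orbitLines n = (fun j : ℤ => 2 * j - 1) '' (Set.Ioc 0 (n : ℤ) ∩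
      Int.cast ⁻¹' (eisensteinRoots (ZMod n) ∪ triplingRoots (ZMod n))) := by
  ext k
  constructor
  · rintro ⟨hk0, hkn, hcop, hne⟩
    obtain ⟨j, rfl⟩ : ∃ j, k = 2 * j - 1 := by
      obtain ⟨i, hi⟩ := Int.isCoprime_two_right.1 hcop.of_mul_right_left
      exact ⟨i + 1, by omega⟩
    exact ⟨j, ⟨by constructor <;> omega,
      (verticalLine_inter_orbit_nonempty_iff_mem_roots hn hcop.of_mul_right_right).1 hne⟩, rfl⟩
  · rintro ⟨j, ⟨⟨hj0, hjn⟩, hj⟩, rfl⟩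
    have hodd : IsCoprime (2 * j - 1) 2 := ⟨-1, j, by ring⟩
    have hcop : IsCoprime (2 * j - 1) (n : ℤ) := by
      rw [isCoprime_comm, ← ZMod.coe_int_isUnit_iff_isCoprime]
      exact_mod_cast isUnit_two_mul_sub_one_of_mem_roots (isUnit_three_zmod h3) hj
    exact ⟨by linarith, by linarith, hodd.mul_right hcop,
      (verticalLine_inter_orbit_nonempty_iff_mem_roots hn hcop).2 hj⟩

theorem encard_orbitLines {n : ℕ} (hn : 0 < n) (h3 : ¬ 3 ∣ n) :
    (orbitLines n).encard = (eisensteinRoots (ZMod n) ∪ triplingRoots (ZMod n)).encard := by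
  have hIoc : Set.BijOn (Int.cast : ℤ → ZMod n) (Set.Ioc 0 (n : ℤ)) Set.univ := by
    simpa only [zero_add] using bijOn_intCast_Ioc hn 0
  have hbij := hIoc.subset_right
    (Set.subset_univ (eisensteinRoots (ZMod n) ∪ triplingRoots (ZMod n)))
  have hinj : Function.Injective fun j : ℤ => 2 * j - 1 := fun i j h => by
    simpa using h
  rw [orbitLines_eq_image hn h3, hinj.encard_image, ← hbij.injOn.encard_image, hbij.image_eq]

theorem count_eisenstein_norm_eq_count_orbit_lines (n : ℕ) (hn : 0 < n) (h3 : ¬ 3 ∣ n) :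
    (eisensteinReps n).encard = (orbitLines n).encard := by
  rw [encard_orbitLines hn h3]
  obtain rfl | hn1 : n = 1 ∨ 1 < n := by omega
  · rw [eisensteinReps_one, encard_dominantReps one_pos]
    congr 1
    exact (Set.union_eq_left.2 fun x _ => Subsingleton.elim _ _).symm
  · rw [eisensteinReps_eq_union, Set.encard_union_eq (disjoint_dominantReps_swap hn1),
      Set.encard_union_eq (disjoint_eisensteinRoots_triplingRoots hn1),
      Set.encard_preimage_of_bijective Prod.swap_bijective, encard_dominantReps hn,
      encard_triplingRoots (isUnit_three_zmod h3)]
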